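/- Let N ≥ 1 and 0 ≤ n ≤ N. Let F: ℂ^N → ℂ^{N−n} be a polynomial map with real coefficients, and let x₀ ∈ ℝ^N satisfy F(x₀) = 0 and suppose the Jacobian matrix of F at x₀ has rank N−n. Then there exists a Euclidean-open neighborhood W of x₀ in ℂ^N such that every polynomial P ∈ ℂ[x₁,…,x_N] vanishing at every point of F⁻¹(0) ∩ W ∩ ℝ^N vanishes at every point of F⁻¹(0) ∩ W. -/

import Mathlib

open MvPolynomial

/-!
Choose a right inverse `R` of the derivative `f' = F'(x₀)` that commutes with complex conjugation.
The map `G z = z + R (F z - f' z)` has derivative `id` at `x₀`, commutes with conjugation, and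
satisfies `f' ∘ G = F`, so near `x₀` it straightens `F⁻¹(0)` to the linear subspace `ker f'`,
carrying real points to real points. It remains to see that a function which is holomorphic on a
conjugation-invariant convex open set and vanishes at the real points of `ker f'` vanishes on
`ker f'`: write a point as `u + i v` with `u`, `v` real and apply the one-variable identity theorem
to `t ↦ u + t v`, which is real for real `t`.
-/

open Function Filter Topology ComplexStarModule

section RealPart

variable {E : Type*} [AddCommGroup E] [Module ℂ E] [StarAddMonoid E] [StarModule ℂ E]

lemma realPart_mem_of_convex {U : Set E} (hU : Convex ℝ U) (hstar : Set.MapsTo star U U) {y : E}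
    (hy : y ∈ U) : (ℜ y : E) ∈ U := by
  rw [realPart_apply_coe, smul_add]
  exact hU hy (hstar hy) (by norm_num) (by norm_num) (by norm_num)

lemma realPart_mem_of_star_mem {K : Submodule ℂ E} {y : E} (hy : y ∈ K) (hstar : star y ∈ K) :
    (ℜ y : E) ∈ K := by
  rw [realPart_apply_coe]
  exact (K.restrictScalars ℝ).smul_mem _ (K.add_mem hy hstar)

lemma imaginaryPart_mem_of_star_mem {K : Submodule ℂ E} {y : E} (hy : y ∈ K)
    (hstar : star y ∈ K) : (ℑ y : E) ∈ K := by
  rw [imaginaryPart_apply_coe]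
  exact K.smul_mem _ ((K.restrictScalars ℝ).smul_mem _ (K.sub_mem hy hstar))

end RealPart

section IdentityTheorem

variable {G : Type*} [NormedAddCommGroup G] [NormedSpace ℂ G] [CompleteSpace G]

lemma eqOn_zero_of_forall_ofReal_eq_zero {g : ℂ → G} {U : Set ℂ} (hU : IsOpen U)
    (hUc : IsPreconnected U) (hg : DifferentiableOn ℂ g U) {r : ℝ} (hr : (r : ℂ) ∈ U)
    (h : ∀ t : ℝ, (t : ℂ) ∈ U → g t = 0) : Set.EqOn g 0 U := by
  have ofReal_tendsto : Tendsto ((↑) : ℝ → ℂ) (𝓝[≠] r) (𝓝[≠] (r : ℂ)) :=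
    Complex.continuous_ofReal.continuousAt.continuousWithinAt.tendsto_nhdsWithin
      fun _ ht => Complex.ofReal_injective.ne ht
  have eventually_mem : ∀ᶠ t : ℝ in 𝓝[≠] r, (t : ℂ) ∈ U :=
    ofReal_tendsto.eventually (nhdsWithin_le_nhds (hU.mem_nhds hr))
  exact (hg.analyticOnNhd hU).eqOn_zero_of_preconnected_of_frequently_eq_zero hUc hr
    (ofReal_tendsto.frequently (eventually_mem.mono h).frequently)

variable {E : Type*} [NormedAddCommGroup E] [NormedSpace ℂ E] [StarAddMonoid E] [StarModule ℂ E]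

lemma eq_zero_on_submodule_of_eq_zero_on_selfAdjoint {K : Submodule ℂ E} {U : Set E} {g : E → G}
    (hK : ∀ y ∈ K, star y ∈ K) (hU : IsOpen U) (hUc : Convex ℝ U) (hUstar : Set.MapsTo star U U)
    (hg : DifferentiableOn ℂ g U) (h : ∀ y ∈ U, y ∈ K → IsSelfAdjoint y → g y = 0) {y : E}
    (hyU : y ∈ U) (hyK : y ∈ K) : g y = 0 := by
  let line : ℂ → E := fun t => ℜ y + t • (ℑ y : E)
  have line_differentiable : Differentiable ℂ line := by fun_prop
  have line_I : line Complex.I = y := realPart_add_I_smul_imaginaryPart y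
  have line_mem (t : ℂ) : line t ∈ K :=
    K.add_mem (realPart_mem_of_star_mem hyK (hK y hyK))
      (K.smul_mem t (imaginaryPart_mem_of_star_mem hyK (hK y hyK)))
  have line_selfAdjoint (t : ℝ) : IsSelfAdjoint (line t) :=
    (ℜ y).2.add (IsSelfAdjoint.smul (Complex.conj_ofReal t) (ℑ y).2)
  have preimage_convex : Convex ℝ (line ⁻¹' U) :=
    (hUc.translate_preimage_right (ℜ y : E)).linear_preimage
      ((LinearMap.toSpanSingleton ℂ E (ℑ y : E)).restrictScalars ℝ)
  have zero_mem : ((0 : ℝ) : ℂ) ∈ line ⁻¹' U := by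
    simpa [line] using realPart_mem_of_convex hUc hUstar hyU
  have I_mem : Complex.I ∈ line ⁻¹' U := by rwa [Set.mem_preimage, line_I]
  have comp_line_I : g (line Complex.I) = 0 :=
    eqOn_zero_of_forall_ofReal_eq_zero (hU.preimage line_differentiable.continuous)
      preimage_convex.isPreconnected
      (hg.comp line_differentiable.differentiableOn (Set.mapsTo_preimage line U)) zero_mem
      (fun t ht => h (line t) ht (line_mem t) (line_selfAdjoint t)) I_mem
  rwa [line_I] at comp_line_I

end IdentityTheorem

section Straightening

variable {𝕜 E V : Type*} [NontriviallyNormedField 𝕜] [NormedAddCommGroup E] [NormedSpace 𝕜 E]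
  [NormedAddCommGroup V] [NormedSpace 𝕜 V] {f : E → V} {f' : E →L[𝕜] V} {R : V →L[𝕜] E} {x : E}

/-- The map `z ↦ z + R (f z - f' z)`. When `R` is a right inverse of the derivative `f'` of `f` at a
point, it is a local coordinate change there that turns `f` into the linear map `f'`. -/
def straightening (f : E → V) (f' : E →L[𝕜] V) (R : V →L[𝕜] E) (z : E) : E :=
  z + R (f z - f' z)

lemma map_straightening (hR : RightInverse R f') (z : E) : f' (straightening f f' R z) = f z := by
  rw [straightening, map_add, hR, add_sub_cancel]

lemma contDiffAt_straightening {n : WithTop ℕ∞} (hf : ContDiffAt 𝕜 n f x) :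
    ContDiffAt 𝕜 n (straightening f f' R) x := by
  unfold straightening
  fun_prop

lemma hasFDerivAt_straightening (hf : HasFDerivAt f f' x) :
    HasFDerivAt (straightening f f' R) (.id 𝕜 E) x :=
  ((hasFDerivAt_id x).add (R.hasFDerivAt.comp x (hf.sub f'.hasFDerivAt))).congr_fderiv (by simp)

lemma semiconj_star_straightening [StarAddMonoid E] [StarAddMonoid V] (hf : Semiconj f star star)
    (hf' : Semiconj f' star star) (hR : Semiconj R star star) :
    Semiconj (straightening f f' R) star star := by
  intro z
  simp only [straightening, hf z, hf' z, ← star_sub, hR _, star_add]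

end Straightening

section StarEquivariant

variable {𝕜 E V : Type*} [RCLike 𝕜]
  [NormedAddCommGroup E] [NormedSpace 𝕜 E] [StarAddMonoid E] [StarModule 𝕜 E] [ContinuousStar E]
  [NormedAddCommGroup V] [NormedSpace 𝕜 V] [StarAddMonoid V] [StarModule 𝕜 V] [ContinuousStar V]

lemma semiconj_star_of_hasFDerivAt {f : E → V} {f' : E →L[𝕜] V} {x : E}
    (hf : Semiconj f star star) (hx : IsSelfAdjoint x) (hf' : HasFDerivAt f f' x) :
    Semiconj f' star star := by
  have conj_f : star ∘ f ∘ star = f := by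
    ext z
    simp [hf z]
  have conj_f' := hf'.star_star
  rw [conj_f, hx.star_eq] at conj_f'
  intro v
  simpa using DFunLike.congr_fun (hf'.unique conj_f') (star v)

lemma exists_rightInverse_semiconj_star {f' : E →L[𝕜] V} (hf' : Semiconj f' star star)
    (h : f'.HasRightInverse) :
    ∃ R : V →L[𝕜] E, RightInverse R f' ∧ Semiconj R star star := by
  obtain ⟨S, hS⟩ := h
  let conjS : V →L[𝕜] E := (starL 𝕜).toContinuousLinearMap.comp
    (S.comp (starL 𝕜).toContinuousLinearMap)
  have conjS_apply (v : V) : conjS v = star (S (star v)) := rfl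
  refine ⟨(2⁻¹ : 𝕜) • (S + conjS), fun v => ?_, fun v => ?_⟩
  · simp [conjS_apply, hf' _, hS _, ← add_smul, ← two_mul]
  · simp [conjS_apply, add_comm]

end StarEquivariant

section RealZeros

lemma isSelfAdjoint_openPartialHomeomorph_symm {X Y : Type*} [TopologicalSpace X]
    [TopologicalSpace Y] [Star X] [Star Y] {φ : OpenPartialHomeomorph X Y}
    (hφ : Semiconj φ star star) {y : Y} (hy : y ∈ φ.target) (hstar : star (φ.symm y) ∈ φ.source)
    (hy_selfAdjoint : IsSelfAdjoint y) : IsSelfAdjoint (φ.symm y) := by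
  refine φ.injOn hstar (φ.map_target hy) ?_
  rw [hφ, φ.right_inv hy, hy_selfAdjoint.star_eq]

variable {E V : Type*} [NormedAddCommGroup E] [NormedSpace ℂ E] [StarAddMonoid E]
  [NormedStarGroup E] [CompleteSpace E]

lemma exists_openPartialHomeomorph_isSelfAdjoint_symm {g : E → E} {x : E}
    (hg : ContDiffAt ℂ 1 g x) (hg' : HasFDerivAt g (.id ℂ E) x)
    (hgstar : Semiconj g star star) (hx : IsSelfAdjoint x) :
    ∃ φ : OpenPartialHomeomorph E E, ⇑φ = g ∧ x ∈ φ.source ∧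
      Convex ℝ φ.target ∧ Set.MapsTo star φ.target φ.target ∧
      DifferentiableOn ℂ φ.symm φ.target ∧
      ∀ y ∈ φ.target, IsSelfAdjoint y → IsSelfAdjoint (φ.symm y) := by
  have hg'_refl : HasFDerivAt g (ContinuousLinearEquiv.refl ℂ E : E →L[ℂ] E) x := hg'
  let ψ := hg.toOpenPartialHomeomorph g hg'_refl one_ne_zero
  have coe_ψ : ⇑ψ = g := rfl
  have x_mem : x ∈ ψ.source := hg.mem_toOpenPartialHomeomorph_source hg'_refl one_ne_zero
  have symm_gx : ψ.symm (g x) = x := ψ.left_inv x_mem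
  have symm_contDiffAt : ContDiffAt ℂ 1 ψ.symm (g x) := hg.to_localInverse hg'_refl one_ne_zero
  have eventually_mem_target : ∀ᶠ y in 𝓝 (g x), y ∈ ψ.target :=
    ψ.open_target.mem_nhds (ψ.map_source x_mem)
  have eventually_differentiableAt : ∀ᶠ y in 𝓝 (g x), DifferentiableAt ℂ ψ.symm y :=
    (symm_contDiffAt.eventually (by simp)).mono fun _ hy => hy.differentiableAt one_ne_zero
  have eventually_star_mem : ∀ᶠ y in 𝓝 (g x), star (ψ.symm y) ∈ ψ.source := by
    refine symm_contDiffAt.continuousAt.star.eventually_mem ?_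
    rw [symm_gx, hx.star_eq]
    exact ψ.open_source.mem_nhds x_mem
  obtain ⟨ε, hε, hball⟩ := Metric.eventually_nhds_iff_ball.1
    (eventually_mem_target.and (eventually_differentiableAt.and eventually_star_mem))
  let φ := (ψ.symm.restrOpen (Metric.ball (g x) ε) Metric.isOpen_ball).symm
  have target_eq : φ.target = Metric.ball (g x) ε :=
    Set.inter_eq_right.2 fun y hy => (hball y hy).1
  have gx_selfAdjoint : star (g x) = g x := by rw [← hgstar x, hx.star_eq]
  refine ⟨φ, coe_ψ, ⟨x_mem, Metric.mem_ball_self hε⟩, ?_⟩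
  rw [target_eq]
  refine ⟨convex_ball _ _, fun y hy => ?_, fun y hy => ?_, fun y hy y_selfAdjoint => ?_⟩
  · rwa [mem_ball_iff_norm, ← gx_selfAdjoint, ← star_sub, norm_star, ← mem_ball_iff_norm]
  · exact (hball y hy).2.1.differentiableWithinAt
  · exact isSelfAdjoint_openPartialHomeomorph_symm (φ := ψ) hgstar (hball y hy).1 (hball y hy).2.2
      y_selfAdjoint

variable [StarModule ℂ E] [NormedAddCommGroup V] [NormedSpace ℂ V] [StarAddMonoid V]
  [StarModule ℂ V] [ContinuousStar V]

theorem exists_isOpen_forall_eq_zero_of_eq_zero_on_selfAdjoint {f : E → V} {f' : E →L[ℂ] V} {x : E}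
    (hf : ContDiffAt ℂ 1 f x) (hf' : HasFDerivAt f f' x) (hinv : f'.HasRightInverse)
    (hfstar : Semiconj f star star) (hx : IsSelfAdjoint x) :
    ∃ W : Set E, IsOpen W ∧ x ∈ W ∧ ∀ P : E → ℂ, DifferentiableOn ℂ P W →
      (∀ z ∈ W, f z = 0 → IsSelfAdjoint z → P z = 0) → ∀ z ∈ W, f z = 0 → P z = 0 := by
  have hf'star : Semiconj f' star star := semiconj_star_of_hasFDerivAt hfstar hx hf'
  obtain ⟨R, hR, hRstar⟩ := exists_rightInverse_semiconj_star hf'star hinv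
  obtain ⟨φ, coe_φ, x_mem, target_convex, target_star, symm_differentiable, symm_selfAdjoint⟩ :=
    exists_openPartialHomeomorph_isSelfAdjoint_symm (contDiffAt_straightening (R := R) hf)
      (hasFDerivAt_straightening hf') (semiconj_star_straightening hfstar hf'star hRstar) hx
  have map_φ (z : E) : f' (φ z) = f z := by rw [coe_φ, map_straightening hR]
  have ker_star (y : E) (hy : f' y = 0) : f' (star y) = 0 := by rw [hf'star y, hy, star_zero]
  refine ⟨φ.source, φ.open_source, x_mem, fun P hP hPreal z hz hfz => ?_⟩
  have comp_symm_eq_zero : P (φ.symm (φ z)) = 0 := by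
    refine eq_zero_on_submodule_of_eq_zero_on_selfAdjoint (K := f'.ker) (g := P ∘ φ.symm) ker_star
      φ.open_target target_convex target_star (hP.comp symm_differentiable φ.mapsTo_symm)
      (fun y hy hyK y_selfAdjoint => ?_) (φ.map_source hz) ((map_φ z).trans hfz)
    refine hPreal _ (φ.map_target hy) ?_ (symm_selfAdjoint y hy y_selfAdjoint)
    rw [← map_φ, φ.right_inv hy]
    exact hyK
  rwa [φ.left_inv hz] at comp_symm_eq_zero

end RealZeros

section Polynomial

lemma mulVec_surjective_of_rank_eq_card {K m n : Type*} [Field K] [Fintype m] [Fintype n]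
    {A : Matrix m n K} (hA : A.rank = Fintype.card m) : Surjective A.mulVec := by
  have range_eq_top : LinearMap.range A.mulVecLin = ⊤ :=
    Submodule.eq_top_of_finrank_eq (hA.trans (Module.finrank_fintype_fun_eq_card K).symm)
  exact LinearMap.range_eq_top.1 range_eq_top

variable {R 𝕜 ι κ : Type*} [CommSemiring R] [NontriviallyNormedField 𝕜] [Algebra R 𝕜] [Fintype ι]

lemma hasFDerivAt_aeval_mvPolynomial (p : MvPolynomial ι R) (x : ι → 𝕜) :
    HasFDerivAt (fun z : ι → 𝕜 => aeval z p)
      (∑ i, aeval x (pderiv i p) • (.proj i : (ι → 𝕜) →L[𝕜] 𝕜)) x := by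
  classical
  induction p using MvPolynomial.induction_on with
  | C a =>
    simp only [aeval_C, pderiv_C, map_zero]
    exact (hasFDerivAt_const (algebraMap R 𝕜 a) x).congr_fderiv
      (ContinuousLinearMap.ext fun v => by simp)
  | add p q hp hq =>
    simp only [map_add]
    exact (hp.fun_add hq).congr_fderiv
      (ContinuousLinearMap.ext fun v => by simp [add_mul, Finset.sum_add_distrib])
  | mul_X p j hp =>
    simp only [Derivation.leibniz, pderiv_X, map_add, map_mul, aeval_X, smul_eq_mul]
    exact (hp.fun_mul (hasFDerivAt_apply j x)).congr_fderiv
      (ContinuousLinearMap.ext fun v => by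
        simp [Pi.single_apply, apply_ite (aeval x), add_mul, Finset.sum_add_distrib,
          Finset.mul_sum, mul_assoc])

lemma hasFDerivAt_pi_aeval_mvPolynomial [CompleteSpace 𝕜] [Finite κ] (F : κ → MvPolynomial ι R)
    (x : ι → 𝕜) :
    HasFDerivAt (fun (z : ι → 𝕜) j => aeval z (F j))
      (Matrix.of fun j i => aeval x (pderiv i (F j))).mulVecLin.toContinuousLinearMap x :=
  hasFDerivAt_pi'.2 fun j => (hasFDerivAt_aeval_mvPolynomial (F j) x).congr_fderiv
    (ContinuousLinearMap.ext fun v => by simp [Matrix.mulVec, dotProduct])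

lemma contDiffAt_pi_aeval_mvPolynomial [CompleteSpace 𝕜] [Fintype κ] {n : WithTop ℕ∞}
    (F : κ → MvPolynomial ι R) (x : ι → 𝕜) :
    ContDiffAt 𝕜 n (fun (z : ι → 𝕜) j => aeval z (F j)) x :=
  contDiffAt_pi.2 fun j => (AnalyticAt.aeval_mvPolynomial
    (fun i => (ContinuousLinearMap.proj (R := 𝕜) (φ := fun _ : ι => 𝕜) i).analyticAt x)
    (F j)).contDiffAt

lemma aeval_star {ι : Type*} (p : MvPolynomial ι ℝ) (z : ι → ℂ) :
    aeval (star z) p = star (aeval z p) :=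
  (comp_aeval_apply z Complex.conjAe.toAlgHom p).symm

lemma isSelfAdjoint_iff_forall_im_eq_zero {ι : Type*} {z : ι → ℂ} :
    IsSelfAdjoint z ↔ ∀ i, (z i).im = 0 :=
  Pi.isSelfAdjoint.trans (forall_congr' fun _ => Complex.conj_eq_iff_im)

end Polynomial

theorem polynomial_vanishing_on_real_zeros_vanishes_locally_general {ι κ : Type*} [Fintype ι]
    [Fintype κ] (F : κ → MvPolynomial ι ℝ) (x₀ : ι → ℂ) (hx₀R : ∀ i, (x₀ i).im = 0)
    (hJac : (Matrix.of fun j i => aeval x₀ (pderiv i (F j))).rank = Fintype.card κ) :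
    ∃ W : Set (ι → ℂ), IsOpen W ∧ x₀ ∈ W ∧ ∀ P : (ι → ℂ) → ℂ, DifferentiableOn ℂ P W →
      (∀ z ∈ W, (∀ j, aeval z (F j) = 0) → (∀ i, (z i).im = 0) → P z = 0) →
      ∀ z ∈ W, (∀ j, aeval z (F j) = 0) → P z = 0 := by
  have jacobian_rightInverse : (Matrix.of fun j i =>
      aeval x₀ (pderiv i (F j))).mulVecLin.toContinuousLinearMap.HasRightInverse :=
    .of_surjective_of_finiteDimensional (mulVec_surjective_of_rank_eq_card hJac)
  obtain ⟨W, hW, hx₀W, h⟩ := exists_isOpen_forall_eq_zero_of_eq_zero_on_selfAdjoint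
    (contDiffAt_pi_aeval_mvPolynomial F x₀) (hasFDerivAt_pi_aeval_mvPolynomial F x₀)
    jacobian_rightInverse (fun z => funext fun j => aeval_star (F j) z)
    (isSelfAdjoint_iff_forall_im_eq_zero.2 hx₀R)
  exact ⟨W, hW, hx₀W, fun P hP hPreal z hz hFz => h P hP
    (fun w hw hFw hwR => hPreal w hw (congrFun hFw) (isSelfAdjoint_iff_forall_im_eq_zero.1 hwR))
    z hz (funext hFz)⟩

/-- Local implicit-function-theorem step: if `F : ℂ^N → ℂ^{N−n}` is a polynomial map with
real coefficients, `x₀` is a real zero of `F`, and the Jacobian of `F` at `x₀` has rank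
`N − n`, then on some Euclidean neighborhood `W` of `x₀`, any complex polynomial vanishing
on the real points of `F⁻¹(0) ∩ W` vanishes on all of `F⁻¹(0) ∩ W`. -/
theorem polynomial_vanishing_on_real_zeros_vanishes_locally
    (N nd : ℕ) (hN : 1 ≤ N) (hnd : nd ≤ N)
    (F : Fin (N - nd) → MvPolynomial (Fin N) ℝ)
    (x₀ : Fin N → ℂ) (hx₀R : ∀ i, (x₀ i).im = 0)
    (hx₀F : ∀ j, MvPolynomial.aeval x₀ (F j) = 0)
    (hJac : (Matrix.of fun (j : Fin (N - nd)) (i : Fin N) =>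
        MvPolynomial.aeval x₀ (MvPolynomial.pderiv i (F j))).rank = N - nd) :
    ∃ W : Set (Fin N → ℂ), IsOpen W ∧ x₀ ∈ W ∧
      ∀ P : MvPolynomial (Fin N) ℂ,
        (∀ z ∈ W, (∀ j, MvPolynomial.aeval z (F j) = 0) → (∀ i, (z i).im = 0) →
          MvPolynomial.eval z P = 0) →
        ∀ z ∈ W, (∀ j, MvPolynomial.aeval z (F j) = 0) → MvPolynomial.eval z P = 0 := by
  obtain ⟨W, hW, hx₀W, h⟩ := polynomial_vanishing_on_real_zeros_vanishes_locally_general F x₀ hx₀R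
    (hJac.trans (Fintype.card_fin _).symm)
  exact ⟨W, hW, hx₀W, fun P =>
    h _ ((AnalyticOnNhd.eval_mvPolynomial P).differentiableOn.mono W.subset_univ)⟩
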